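/- arXiv:2605.02731 — 2 statements merged into one kernel-verified Lean document; each statement's English description precedes it below -/
import Mathlib

section
/- Let G be an exceptional graph with root r that is not K_{2,3}, and let x, y be the two degree-2 vertices of G other than r. Then in G − y there exist (r, x)-paths of length congruent to 0 mod 3 and of length congruent to 2 mod 3, and symmetrically in G − x there exist (r, y)-paths of length 0 mod 3 and 2 mod 3. -/
open SimpleGraph

/-- `ExcAux G r x y`: `G` is an exceptional graph with root `r`, whose two degree-2
vertices other than `r` are `x` and `y`.  Exceptional graphs are built recursively
from `K_{2,3}` (the root `r` being one of its three degree-2 vertices):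
* if `x` and `y` are non-adjacent, one may add a new path of length 3 joining them;
* if `x` and `y` are adjacent, one may add a new vertex whose neighbourhood is that
  of `x` (or of `y`), or a new 4-cycle `a b c d a` together with the edges `x a`
  and `c y`.
Newly added vertices are required to be fresh, i.e. isolated beforehand. -/
inductive ExcAux {V : Type*} : SimpleGraph V → V → V → V → Prop
  | base (r x y a b : V) (hd : ([r, x, y, a, b] : List V).Pairwise (· ≠ ·)) :
      ExcAux (SimpleGraph.fromEdgeSet
        {s(r, a), s(r, b), s(x, a), s(x, b), s(y, a), s(y, b)}) r x y
  | symm (G : SimpleGraph V) (r x y : V) : ExcAux G r x y → ExcAux G r y x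
  | addPath (H : SimpleGraph V) (r x y p q : V) :
      ExcAux H r x y → ¬ H.Adj x y → p ≠ q →
      H.neighborSet p = ∅ → H.neighborSet q = ∅ →
      ExcAux (H ⊔ SimpleGraph.fromEdgeSet {s(x, p), s(p, q), s(q, y)}) r p q
  | addTwin (H : SimpleGraph V) (r x y w a : V) :
      ExcAux H r x y → H.Adj x y → H.neighborSet x = {y, a} →
      H.neighborSet w = ∅ →
      ExcAux (H ⊔ SimpleGraph.fromEdgeSet {s(w, y), s(w, a)}) r x w
  | addSquare (H : SimpleGraph V) (r x y a b c d : V) :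
      ExcAux H r x y → H.Adj x y →
      ([a, b, c, d] : List V).Pairwise (· ≠ ·) →
      H.neighborSet a = ∅ → H.neighborSet b = ∅ →
      H.neighborSet c = ∅ → H.neighborSet d = ∅ →
      ExcAux (H ⊔ SimpleGraph.fromEdgeSet
        {s(a, b), s(b, c), s(c, d), s(d, a), s(x, a), s(c, y)}) r b d

/-!
Paths in an exceptional graph are grown along the construction, tracking lengths mod 3. Besides the
residues `0` and `2` of the theorem, the induction needs residue `1` as long as `x` and `y` are not
adjacent, but there the other vertex may be visited. Already `K_{2,3}` has residue `2` (through one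
branch vertex) and residue `1` (length `4`, through the other degree-2 vertex).
A new path of length 3 shifts the residues `1` and `2` by one, giving `2` and `0`. A twin `w` of `x`
takes over the paths ending in `x`, and residue `1` comes from paths of residue `0` to `y`. If `x`
and `y` are adjacent, all three residues reach `x` once `y` may be visited, hence all three reach
the new 4-cycle, whose entry vertex is adjacent to both new degree-2 vertices.
-/

section HasPathMod

variable {V : Type*} {m : ℕ} {G H : SimpleGraph V} {S T : Set V} {u v w : V} {k : ZMod m}

/-- `G` has a path from `u` to `v` in `G - S` whose length has residue `k` modulo `m`. The residue
lives in `ZMod m`, so that extending a path by an edge is adding `1`. -/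
def HasPathMod (G : SimpleGraph V) (S : Set V) (u v : V) (k : ZMod m) : Prop :=
  ∃ p : G.Walk u v, p.IsPath ∧ (∀ w ∈ S, w ∉ p.support) ∧ (p.length : ZMod m) = k

theorem mem_support_of_mem_walk_support_of_start (p : G.Walk u v) (hu : u ∈ G.support)
    (hw : w ∈ p.support) : w ∈ G.support := by
  by_cases hp : p.Nil
  · have hwu : w = u := by simpa [Walk.nil_iff_support_eq.mp hp] using hw
    exact hwu ▸ hu
  · exact mem_support_of_mem_walk_support p hp hw

namespace HasPathMod

theorem end_mem_support (h : HasPathMod G S u v k) (hu : u ∈ G.support) : v ∈ G.support :=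
  let ⟨p, _⟩ := h
  mem_support_of_mem_walk_support_of_start p hu p.end_mem_support

/-- A path starting at a non-isolated vertex avoids all isolated vertices, so only the part of `T`
inside the support of the smaller graph matters. -/
theorem mono (h : HasPathMod H S u v k) (hu : u ∈ H.support) (hHG : H ≤ G)
    (hTS : T ∩ H.support ⊆ S) : HasPathMod G T u v k := by
  obtain ⟨p, hp, hpS, hk⟩ := h
  refine ⟨p.mapLe hHG, hp.mapLe hHG, fun w hwT hwp ↦ ?_, by simpa using hk⟩
  have hwp' : w ∈ p.support := by simpa using hwp
  exact hpS w (hTS ⟨hwT, mem_support_of_mem_walk_support_of_start p hu hwp'⟩) hwp'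

theorem concat (h : HasPathMod G S u v k) (hvw : G.Adj v w) (hTS : insert w T ⊆ S) (hwT : w ∉ T) :
    HasPathMod G T u w (k + 1) := by
  obtain ⟨p, hp, hpS, hk⟩ := h
  refine ⟨p.concat hvw, hp.concat (hpS w (hTS (Set.mem_insert w T))) hvw, fun z hzT hz ↦ ?_, ?_⟩
  · rw [Walk.support_concat, List.mem_append, List.mem_singleton] at hz
    rcases hz with hzp | rfl
    · exact hpS z (hTS (Set.mem_insert_of_mem w hzT)) hzp
    · exact hwT hzT
  · rw [Walk.length_concat, Nat.cast_succ, hk]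

theorem concat_of_notMem_support (h : HasPathMod H S u v k) (hu : u ∈ H.support) (hHG : H ≤ G)
    (hvw : G.Adj v w) (hw : w ∉ H.support) (hTS : T ∩ H.support ⊆ S) (hwT : w ∉ T) :
    HasPathMod G T u w (k + 1) :=
  (h.mono (T := insert w T) hu hHG (by grind)).concat hvw subset_rfl hwT

theorem exists_penultimate (h : HasPathMod G S u v k) (huv : u ≠ v) :
    ∃ w, G.Adj w v ∧ w ∉ S ∧ HasPathMod G (insert v S) u w (k - 1) := by
  obtain ⟨p, hp, hpS, rfl⟩ := h
  have hnil : ¬ p.Nil := fun hp ↦ huv hp.eq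
  have hsupp : p.support = p.dropLast.support ++ [v] := (p.support_dropLast_concat hnil).symm
  have hmem {z : V} (hz : z ∈ p.dropLast.support) : z ∈ p.support := by simp [hsupp, hz]
  have hv : v ∉ p.dropLast.support := by
    have hnodup := hp.support_nodup
    rw [hsupp] at hnodup
    grind
  refine ⟨p.penultimate, p.adj_penultimate hnil, fun hS ↦ hpS _ hS (hmem (Walk.end_mem_support _)),
    p.dropLast, hp.dropLast, ?_, ?_⟩
  · rintro z (rfl | hzS) hz
    exacts [hv hz, hpS z hzS (hmem hz)]
  · rw [← p.length_dropLast_add_one hnil, Nat.cast_succ, add_sub_cancel_right]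

/-- The last edge `a v` of the path is replaced by `a w`. -/
theorem of_twin {y a : V} (h : HasPathMod H {y} u v k) (hu : u ∈ H.support) (huv : u ≠ v)
    (hv : H.neighborSet v = {y, a}) (hHG : H ≤ G) (haw : G.Adj a w) (hw : w ∉ H.support) :
    HasPathMod G {v} u w k := by
  obtain ⟨b, hbv, hby, hb⟩ := h.exists_penultimate huv
  have hba : b = a := by
    have hbmem : b ∈ H.neighborSet v := hbv.symm
    rw [hv] at hbmem
    exact hbmem.resolve_left hby
  subst hba
  have hwv : w ≠ v := fun hwv ↦ hw (hwv ▸ hbv.mem_support_right)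
  simpa using hb.concat_of_notMem_support (T := {v}) hu hHG haw hw (by grind) hwv

theorem exists_isPath_length_mod {n : ℕ} (h : HasPathMod G {w} u v (n : ZMod m)) :
    ∃ p : G.Walk u v, p.IsPath ∧ w ∉ p.support ∧ p.length % m = n % m := by
  obtain ⟨p, hp, hpw, hk⟩ := h
  exact ⟨p, hp, hpw w rfl, (ZMod.natCast_eq_natCast_iff' _ _ _).mp hk⟩

end HasPathMod

end HasPathMod

section Exceptional

variable {V : Type*} {G H : SimpleGraph V} {r x y : V}

/-- `G` is a copy of `K_{2,3}` in which `r`, `x`, `y` are the three degree-2 vertices (together with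
isolated vertices, as in `ExcAux`). -/
def IsK23 (G : SimpleGraph V) (r x y : V) : Prop :=
  ∃ a b, [r, x, y, a, b].Nodup ∧
    G = fromEdgeSet {s(r, a), s(r, b), s(x, a), s(x, b), s(y, a), s(y, b)}

theorem IsK23.symm (h : IsK23 G r x y) : IsK23 G r y x := by
  obtain ⟨a, b, hd, rfl⟩ := h
  refine ⟨a, b, by grind, congrArg fromEdgeSet ?_⟩
  grind

theorem IsK23.not_adj (h : IsK23 G r x y) : ¬ G.Adj x y := by
  obtain ⟨a, b, hd, rfl⟩ := h
  simp only [fromEdgeSet_adj, Set.mem_insert_iff, Set.mem_singleton_iff, Sym2.eq_iff]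
  grind

/-- The part of the induction invariant for exceptional graphs that concerns the paths from the
root `r` to the degree-2 vertex `x`, where `y` is the other degree-2 vertex. -/
structure RootPaths (G : SimpleGraph V) (r x y : V) : Prop where
  ne : r ≠ x
  residue_zero : ¬ IsK23 G r x y → HasPathMod G {y} r x (0 : ZMod 3)
  residue_one : ¬ G.Adj x y → HasPathMod G ∅ r x (1 : ZMod 3)
  residue_two : HasPathMod G {y} r x (2 : ZMod 3)

theorem IsK23.rootPaths (h : IsK23 G r x y) : RootPaths G r x y := by
  have hK := h
  obtain ⟨a, b, hd, rfl⟩ := h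
  set G := fromEdgeSet {s(r, a), s(r, b), s(x, a), s(x, b), s(y, a), s(y, b)} with hG
  have hra : G.Adj r a := by simp [hG, show r ≠ a by grind]
  have hax : G.Adj a x := by simp [hG, show a ≠ x by grind]
  have hay : G.Adj a y := by simp [hG, show a ≠ y by grind]
  have hyb : G.Adj y b := by simp [hG, show y ≠ b by grind]
  have hbx : G.Adj b x := by simp [hG, show b ≠ x by grind]
  exact {
    ne := by grind
    residue_zero := absurd hK
    residue_one := fun _ ↦ ⟨.cons hra (.cons hay (.cons hyb hbx.toWalk)),
      (Walk.isPath_def _).mpr (show [r, a, y, b, x].Nodup by grind), by simp,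
      show ((4 : ℕ) : ZMod 3) = 1 from rfl⟩
    residue_two := ⟨.cons hra hax.toWalk, (Walk.isPath_def _).mpr (show [r, a, x].Nodup by grind),
      show ∀ w ∈ ({y} : Set V), w ∉ [r, a, x] by grind, rfl⟩ }

namespace RootPaths

theorem root_mem_support (h : RootPaths G r x y) : r ∈ G.support :=
  let ⟨p, _⟩ := h.residue_two
  mem_support_of_reachable h.ne p.reachable

theorem end_mem_support (h : RootPaths G r x y) : x ∈ G.support :=
  h.residue_two.end_mem_support h.root_mem_support

theorem of_forall (hne : r ≠ x) (h : ∀ k : ZMod 3, HasPathMod G {y} r x k) : RootPaths G r x y where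
  ne := hne
  residue_zero _ := h 0
  residue_one _ :=
    let ⟨p, hp, _, hk⟩ := h 1
    ⟨p, hp, by simp, hk⟩
  residue_two := h 2

theorem residue_zero_of_adj (h : RootPaths G r x y) (hxy : G.Adj x y) :
    HasPathMod G {y} r x (0 : ZMod 3) :=
  h.residue_zero fun hK ↦ hK.not_adj hxy

theorem other_residue_one_of_adj (h : RootPaths G r x y) (hxy : G.Adj x y) :
    HasPathMod G ∅ r y (1 : ZMod 3) :=
  (h.residue_zero_of_adj hxy).concat hxy (by simp) (Set.notMem_empty y)

theorem hasPathMod_of_adj (hx : RootPaths G r x y) (hy : RootPaths G r y x) (hxy : G.Adj x y)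
    (k : ZMod 3) : HasPathMod G ∅ r x k := by
  have hr := hx.root_mem_support
  fin_cases k
  · exact (hx.residue_zero_of_adj hxy).mono hr le_rfl (by simp)
  · exact hy.other_residue_one_of_adj hxy.symm
  · exact hx.residue_two.mono hr le_rfl (by simp)

section

variable {p q w a b d : V}

theorem addPath (hx : RootPaths H r x y) (hxy : ¬ H.Adj x y) (hHG : H ≤ G) (hxp : G.Adj x p)
    (hpq : G.Adj p q) (hp : p ∉ H.support) (hq : q ∉ H.support) : RootPaths G r p q where
  ne hrp := hp (hrp ▸ hx.root_mem_support)
  residue_zero _ := hx.residue_two.concat_of_notMem_support hx.root_mem_support hHG hxp hp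
    (by grind) hpq.ne
  residue_one hnadj := absurd hpq hnadj
  residue_two := (hx.residue_one hxy).concat_of_notMem_support hx.root_mem_support hHG hxp hp
    (by grind) hpq.ne

theorem addTwin_left (hx : RootPaths H r x y) (hy : RootPaths H r y x) (hxy : H.Adj x y)
    (hHG : H ≤ G) (hw : w ∉ H.support) : RootPaths G r x w where
  ne := hx.ne
  residue_zero _ := (hx.residue_zero_of_adj hxy).mono hx.root_mem_support hHG (by grind)
  residue_one _ := (hy.other_residue_one_of_adj hxy.symm).mono hx.root_mem_support hHG (by grind)
  residue_two := hx.residue_two.mono hx.root_mem_support hHG (by grind)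

theorem addTwin_right (hx : RootPaths H r x y) (hy : RootPaths H r y x) (hxy : H.Adj x y)
    (hnbr : H.neighborSet x = {y, a}) (hHG : H ≤ G) (hyw : G.Adj y w) (haw : G.Adj a w)
    (hw : w ∉ H.support) : RootPaths G r w x where
  ne hrw := hw (hrw ▸ hx.root_mem_support)
  residue_zero _ := (hx.residue_zero_of_adj hxy).of_twin hx.root_mem_support hx.ne hnbr hHG haw hw
  residue_one _ := (hy.residue_zero_of_adj hxy.symm).concat_of_notMem_support
    hx.root_mem_support hHG hyw hw (by simp) (Set.notMem_empty w)
  residue_two := hx.residue_two.of_twin hx.root_mem_support hx.ne hnbr hHG haw hw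

theorem addSquare (hx : RootPaths H r x y) (hy : RootPaths H r y x) (hxy : H.Adj x y)
    (hHG : H ≤ G) (hxa : G.Adj x a) (hab : G.Adj a b) (had : G.Adj a d) (hbd : b ≠ d)
    (ha : a ∉ H.support) (hb : b ∉ H.support) (hd : d ∉ H.support) : RootPaths G r b d := by
  refine of_forall (fun hrb ↦ hb (hrb ▸ hx.root_mem_support)) fun k ↦ ?_
  have hra : HasPathMod G {b, d} r a (k - 2 + 1) :=
    (hx.hasPathMod_of_adj hy hxy (k - 2)).concat_of_notMem_support hx.root_mem_support hHG hxa ha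
      (by grind) (by simp [hab.ne, had.ne])
  convert hra.concat hab subset_rfl hbd using 1
  ring

end

end RootPaths

theorem ExcAux.rootPaths (h : ExcAux G r x y) : RootPaths G r x y ∧ RootPaths G r y x := by
  induction h with
  | base r x y a b hd =>
    have hK : IsK23 _ r x y := ⟨a, b, hd, rfl⟩
    exact ⟨hK.rootPaths, hK.symm.rootPaths⟩
  | symm G r x y _ ih => exact ih.symm
  | addPath H r x y p q _ hxy hpq hp hq ih =>
    obtain ⟨hx, hy⟩ := ih
    rw [neighborSet_eq_empty, ← notMem_support_iff_isIsolated] at hp hq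
    have hxp : x ≠ p := fun h ↦ hp (h ▸ hx.end_mem_support)
    have hqy : q ≠ y := fun h ↦ hq (h ▸ hy.end_mem_support)
    exact ⟨hx.addPath hxy le_sup_left (by simp [hxp]) (by simp [hpq]) hp hq,
      hy.addPath (mt Adj.symm hxy) le_sup_left (by simp [hqy.symm]) (by simp [hpq.symm]) hq hp⟩
  | addTwin H r x y w a _ hxy hnbr hw ih =>
    obtain ⟨hx, hy⟩ := ih
    rw [neighborSet_eq_empty, ← notMem_support_iff_isIsolated] at hw
    have hxa : H.Adj x a := by simp [← mem_neighborSet, hnbr]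
    have hyw : y ≠ w := fun h ↦ hw (h ▸ hy.end_mem_support)
    have haw : a ≠ w := fun h ↦ hw (h ▸ hxa.mem_support_right)
    exact ⟨hx.addTwin_left hy hxy le_sup_left hw,
      hx.addTwin_right hy hxy hnbr le_sup_left (by simp [hyw]) (by simp [haw]) hw⟩
  | addSquare H r x y a b c d _ hxy hdistinct ha hb _ hd ih =>
    obtain ⟨hx, hy⟩ := ih
    rw [neighborSet_eq_empty, ← notMem_support_iff_isIsolated] at ha hb hd
    have hxa : x ≠ a := fun h ↦ ha (h ▸ hx.end_mem_support)
    obtain ⟨hab, had, hbd⟩ : a ≠ b ∧ a ≠ d ∧ b ≠ d := by grind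
    exact ⟨hx.addSquare hy hxy le_sup_left (by simp [hxa]) (by simp [hab]) (by simp [had])
        hbd ha hb hd,
      hx.addSquare hy hxy le_sup_left (by simp [hxa]) (by simp [had]) (by simp [hab])
        hbd.symm ha hd hb⟩

end Exceptional

/-- Let `G` be an exceptional graph with root `r` and further degree-2 vertices `x, y`,
and suppose `G` is not `K_{2,3}` itself.  Then `G - y` contains `(r, x)`-paths of
lengths `≡ 0` and `≡ 2 (mod 3)`, and `G - x` contains `(r, y)`-paths of lengths
`≡ 0` and `≡ 2 (mod 3)`. -/
theorem stmt_8 {V : Type*} (G : SimpleGraph V) (r x y : V)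
    (hG : ExcAux G r x y)
    (hnotK23 : ∀ a b : V, G ≠ SimpleGraph.fromEdgeSet
      {s(r, a), s(r, b), s(x, a), s(x, b), s(y, a), s(y, b)}) :
    (∃ p : G.Walk r x, p.IsPath ∧ y ∉ p.support ∧ p.length % 3 = 0) ∧
    (∃ p : G.Walk r x, p.IsPath ∧ y ∉ p.support ∧ p.length % 3 = 2) ∧
    (∃ p : G.Walk r y, p.IsPath ∧ x ∉ p.support ∧ p.length % 3 = 0) ∧
    (∃ p : G.Walk r y, p.IsPath ∧ x ∉ p.support ∧ p.length % 3 = 2) := by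
  obtain ⟨hx, hy⟩ := hG.rootPaths
  have hK : ¬ IsK23 G r x y := fun ⟨a, b, _, hGab⟩ ↦ hnotK23 a b hGab
  exact ⟨(hx.residue_zero hK).exists_isPath_length_mod (n := 0),
    hx.residue_two.exists_isPath_length_mod (n := 2),
    (hy.residue_zero (mt IsK23.symm hK)).exists_isPath_length_mod (n := 0),
    hy.residue_two.exists_isPath_length_mod (n := 2)⟩
end

section
/- In a graph with no cycle of length divisible by 4, any two odd cycles whose lengths are congruent modulo 4 must intersect (they cannot be connected by three pairwise vertex-disjoint paths while remaining disjoint). In particular, if the graph is essentially 3-connected and planar, it contains no two vertex-disjoint 5-cycles. -/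
/-- The graph obtained from `G` by deleting the vertices of `S`
(the vertices of `S` stay present but become isolated). -/
def deleteVerts {V : Type*} (G : SimpleGraph V) (S : Set V) : SimpleGraph V :=
  SimpleGraph.fromRel fun a b => G.Adj a b ∧ a ∉ S ∧ b ∉ S

/-- `G` is essentially 3-connected: `G` is connected and has no vertex cut `S` with
`|S| ≤ 2` such that `G − S` has two distinct components with at least two vertices
each. -/
def EssentiallyThreeConnected {V : Type*} (G : SimpleGraph V) : Prop :=
  G.Connected ∧
    ∀ S : Set V, S.ncard ≤ 2 →
      ∀ a a' b b' : V, a ≠ a' → b ≠ b' →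
        (deleteVerts G S).Reachable a a' → (deleteVerts G S).Reachable b b' →
        (deleteVerts G S).Reachable a b

/-!
Two disjoint paths between disjoint cycles `C₁` and `C₂`, together with an arc of each cycle
between their ends, form a cycle. There are two choices for either arc. If the cycles are odd of
lengths congruent modulo 4 and the two paths have even total length, then two complementary choices
of arcs give cycles of even length whose lengths add up to 2 modulo 4, so that one of these lengths
is divisible by 4. Among three disjoint paths, some two have even total length.

If neither cycle is a triangle, then after the deletion of two vertices each of them still has an
edge, so in an essentially 3-connected graph no two vertices separate them, and Menger's theorem
provides three disjoint paths. Menger's theorem is proved by enlarging a linkage one path at a time,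
along a path that avoids its last vertices.
-/

open SimpleGraph

section DisjointPaths

variable {V : Type*} {G : SimpleGraph V} {A B X : Set V}

/-- An `A`–`B` path in the sense of Menger's theorem: a path that meets `A` exactly in its first
vertex and `B` exactly in its last one. -/
structure ABPath (G : SimpleGraph V) (A B : Set V) where
  {first last : V}
  walk : G.Walk first last
  isPath : walk.IsPath
  first_mem : first ∈ A
  last_mem : last ∈ B
  eq_first : ∀ u ∈ walk.support, u ∈ A → u = first
  eq_last : ∀ u ∈ walk.support, u ∈ B → u = last

/-- The vertex set of an `A`–`B` path. -/
def ABPath.verts (P : ABPath G A B) : Set V := {u | u ∈ P.walk.support}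

/-- A linkage: a family of pairwise vertex-disjoint paths. The source sets may vary with the index,
so that linkages of tails starting at prescribed vertices are covered too. -/
def IsLinkage {ι : Type*} {A : ι → Set V} (P : ∀ i, ABPath G (A i) B) : Prop :=
  Pairwise fun i j => Disjoint (P i).verts (P j).verts

/-- `S` separates `A` from `B`: every walk from `A` to `B` meets `S`. -/
def Separates (G : SimpleGraph V) (A B : Set V) (S : Finset V) : Prop :=
  ∀ a ∈ A, ∀ b ∈ B, ∀ w : G.Walk a b, ∃ u ∈ w.support, u ∈ S

lemma exists_isPath_to_first_mem {u v : V} (w : G.Walk u v) (hw : ∃ x ∈ w.support, x ∈ X) :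
    ∃ x ∈ X, ∃ p : G.Walk u x, p.IsPath ∧ p.support ⊆ w.support ∧
      ∀ t ∈ p.support, t ∈ X → t = x := by
  classical
  obtain ⟨x, hxX, hx, hfirst⟩ := w.exists_mem_support_forall_mem_support_imp_eq
    {x ∈ w.support.toFinset | x ∈ X} (by
      obtain ⟨x, hx, hxX⟩ := hw
      exact ⟨x, by simp [hx, hxX]⟩)
  have hsub := w.support_takeUntil_subset_support hx
  have hbypass := (w.takeUntil x hx).support_bypass_subset_support
  refine ⟨x, (Finset.mem_filter.mp hxX).2, (w.takeUntil x hx).bypass, Walk.bypass_isPath _,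
    fun t ht => hsub (hbypass ht), fun t ht htX => hfirst t ?_ (hbypass ht)⟩
  exact Finset.mem_filter.mpr ⟨List.mem_toFinset.mpr (hsub (hbypass ht)), htX⟩

namespace ABPath

@[simp] lemma mem_verts {P : ABPath G A B} {u : V} : u ∈ P.verts ↔ u ∈ P.walk.support := Iff.rfl

lemma first_mem_verts (P : ABPath G A B) : P.first ∈ P.verts := P.walk.start_mem_support

lemma last_mem_verts (P : ABPath G A B) : P.last ∈ P.verts := P.walk.end_mem_support

lemma mem_verts_of_singleton {v : V} (P : ABPath G {v} B) : v ∈ P.verts := by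
  have hfirst : P.first = v := P.first_mem
  simpa only [hfirst] using P.first_mem_verts

/-- The one-vertex path. -/
def nil {v : V} (hv : v ∈ B) : ABPath G {v} B where
  walk := (Walk.nil : G.Walk v v)
  isPath := Walk.IsPath.nil
  first_mem := rfl
  last_mem := hv
  eq_first _ hu _ := by simpa using hu
  eq_last _ hu _ := by simpa using hu

@[simp] lemma verts_nil {v : V} (hv : v ∈ B) : (nil hv : ABPath G {v} B).verts = {v} := by
  simp [verts, nil]

lemma exists_of_walk {a b : V} (w : G.Walk a b) (ha : a ∈ A) (hb : b ∈ B) :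
    ∃ P : ABPath G A B, P.verts ⊆ {u | u ∈ w.support} := by
  obtain ⟨y, hy, p, -, hpw, hpB⟩ := exists_isPath_to_first_mem w ⟨b, w.end_mem_support, hb⟩
  obtain ⟨x, hx, q, hq, hqp, hqA⟩ :=
    exists_isPath_to_first_mem p.reverse ⟨a, p.reverse.end_mem_support, ha⟩
  have hqp' : ∀ u ∈ q.reverse.support, u ∈ p.support := fun u hu => by
    simpa using hqp (by simpa using hu)
  exact ⟨⟨q.reverse, hq.reverse, hx, hy, fun u hu => hqA u (by simpa using hu),
    fun u hu => hpB u (hqp' u hu)⟩, fun u hu => hpw (hqp' u hu)⟩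

lemma exists_split (P : ABPath G A B) {x : V} (hx : x ∈ P.verts) :
    ∃ (C : ABPath G A {x}) (D : ABPath G {x} B), C.verts ⊆ P.verts ∧ D.verts ⊆ P.verts ∧
      D.last = P.last ∧ ∀ u ∈ C.verts, u ∈ D.verts → u = x := by
  obtain ⟨p, q, hp, hq, hpq⟩ := P.isPath.mem_support_iff_exists_append.mp hx
  have hpP : ∀ u ∈ p.support, u ∈ P.walk.support := fun u hu => by simp [hpq, hu]
  have hqP : ∀ u ∈ q.support, u ∈ P.walk.support := fun u hu => by simp [hpq, hu]
  refine ⟨⟨p, hp, P.first_mem, rfl, fun u hu => P.eq_first u (hpP u hu), fun _ _ h => h⟩,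
    ⟨q, hq, rfl, P.last_mem, fun _ _ h => h, fun u hu => P.eq_last u (hqP u hu)⟩,
    hpP, hqP, rfl, fun u hup huq => by_contra fun hux => ?_⟩
  exact (hpq ▸ P.isPath).ne_of_mem_support_of_append hux hup huq rfl

lemma exists_tail_from_last_mem (P : ABPath G A B) (hX : (P.verts ∩ X).Nonempty) :
    ∃ x ∈ X, ∃ D : ABPath G {x} B, D.verts ⊆ P.verts ∧ ∀ u ∈ D.verts, u ∈ X → u = x := by
  obtain ⟨z, hzP, hzX⟩ := hX
  obtain ⟨x, hx, p, hp, hpP, hpX⟩ :=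
    exists_isPath_to_first_mem P.walk.reverse ⟨z, by simpa using hzP, hzX⟩
  have hpP' : ∀ u ∈ p.reverse.support, u ∈ P.walk.support := fun u hu => by
    simpa using hpP (by simpa using hu)
  exact ⟨x, hx, ⟨p.reverse, hp.reverse, rfl, P.last_mem, fun _ _ h => h,
    fun u hu => P.eq_last u (hpP' u hu)⟩, hpP', fun u hu => hpX u (by simpa [verts] using hu)⟩

lemma exists_retarget {a x : V} (w : G.Walk a x) (ha : a ∈ A) (hx : x ∈ X)
    (hw : ∀ u ∈ w.support, u ∈ X → u = x) :
    ∃ P : ABPath G A X, P.verts ⊆ {u | u ∈ w.support} ∧ P.last = x :=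
  let ⟨P, hP⟩ := exists_of_walk w ha hx
  ⟨P, hP, hw _ (hP P.last_mem_verts) P.last_mem⟩

lemma exists_append (P : ABPath G A X) (T : ABPath G {P.last} B) (hBX : B ⊆ X) :
    ∃ R : ABPath G A B, R.verts ⊆ P.verts ∪ T.verts ∧ R.last = T.last := by
  have hT : T.first = P.last := T.first_mem
  obtain ⟨R, hR⟩ := exists_of_walk (P.walk.append (T.walk.copy hT rfl)) P.first_mem T.last_mem
  have hRsub : R.verts ⊆ P.verts ∪ T.verts := fun u hu => by simpa using hR hu
  refine ⟨R, hRsub, T.eq_last _ ?_ R.last_mem⟩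
  rcases hRsub R.last_mem_verts with hRP | hRT
  · have hRlast : R.last = P.last := P.eq_last _ hRP (hBX R.last_mem)
    simpa only [hRlast, mem_verts] using T.mem_verts_of_singleton
  · exact hRT

end ABPath

section Menger

variable {ι : Type*}

lemma isLinkage_option {A : Option ι → Set V} {P : ∀ o, ABPath G (A o) B}
    (hnone : ∀ i, Disjoint (P none).verts (P (some i)).verts)
    (hsome : IsLinkage fun i => P (some i)) : IsLinkage P := by
  rintro (_ | i) (_ | j) hij
  · exact absurd rfl hij
  · exact hnone j
  · exact (hnone i).symm
  · exact hsome fun h => hij (congrArg some h)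

variable {P : ι → ABPath G A B}

lemma IsLinkage.exists_append {P : ι → ABPath G A X} (hP : IsLinkage P) (hBX : B ⊆ X)
    {T : ∀ i, ABPath G {(P i).last} B} (hT : IsLinkage T) (hTX : ∀ i, (T i).verts ⊆ X) :
    ∃ R : ι → ABPath G A B, IsLinkage R ∧ ∀ i, (R i).last = (T i).last := by
  choose R hR hlast using fun i => (P i).exists_append (T i) hBX
  -- A path to `X` meets the tails, which lie in `X`, only in its last vertex.
  have hPT : Pairwise fun i j => Disjoint (P i).verts (T j).verts := fun i j hij => by
    refine Set.disjoint_left.mpr fun u hu hu' => Set.disjoint_left.mp (hT hij) ?_ hu'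
    exact (P i).eq_last u hu (hTX j hu') ▸ (T i).mem_verts_of_singleton
  refine ⟨R, fun i j hij => ?_, hlast⟩
  refine Set.disjoint_of_subset (hR i) (hR j) ?_
  simp only [Set.disjoint_union_left, Set.disjoint_union_right]
  exact ⟨⟨hP hij, (hPT hij.symm).symm⟩, hPT hij, hT hij⟩

/-- `Q` runs into an enlarged target set `X`. The tails leading back to `B` are trivial except at
`none` and `i₀`, and the two tails there are kept apart by `Z`. -/
lemma IsLinkage.exists_option_of_tails (hP : IsLinkage P) (hBX : B ⊆ X)
    {Q : Option ι → ABPath G A X} (hQ : IsLinkage Q) {i₀ : ι}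
    (hQi : ∀ i ≠ i₀, (Q (some i)).last = (P i).last)
    (Z : Set V) (hZ : ∀ i ≠ i₀, (P i).last ∉ Z)
    (hnone : ∃ T : ABPath G {(Q none).last} B, T.verts ⊆ X ∩ Z)
    (hsome : ∃ T : ABPath G {(Q (some i₀)).last} B, T.verts ⊆ (X ∩ (P i₀).verts) \ Z) :
    ∃ R : Option ι → ABPath G A B, IsLinkage R ∧ ∀ i, (R (some i)).last = (P i).last := by
  obtain ⟨N, hN⟩ := hnone
  have hsome' : ∀ i, ∃ T : ABPath G {(Q (some i)).last} B, T.verts ⊆ (X ∩ (P i).verts) \ Z := by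
    intro i
    obtain rfl | hi := eq_or_ne i i₀
    · exact hsome
    · rw [hQi i hi]
      refine ⟨.nil (P i).last_mem, ?_⟩
      rw [ABPath.verts_nil, Set.singleton_subset_iff]
      exact ⟨⟨hBX (P i).last_mem, (P i).last_mem_verts⟩, hZ i hi⟩
  choose T hT using hsome'
  have hNT : ∀ i, Disjoint N.verts (T i).verts := fun i =>
    Set.disjoint_left.mpr fun u hu hu' => (hT i hu').2 (hN hu).2
  let T' : ∀ o, ABPath G {(Q o).last} B := fun o => o.rec N T
  have hT' : IsLinkage T' := isLinkage_option hNT fun i j hij =>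
    (hP hij).mono (fun u hu => (hT i hu).1.2) fun u hu => (hT j hu).1.2
  obtain ⟨R, hR, hlast⟩ := hQ.exists_append hBX hT' (by
    rintro (_ | i) u hu
    · exact (hN hu).1
    · exact (hT i hu).1.1)
  exact ⟨R, hR, fun i => (hlast (some i)).trans
    ((P i).eq_last _ (hT i (T i).last_mem_verts).1.2 (T i).last_mem)⟩

section Crossing

variable {i₀ : ι} {x : V} {D E : ABPath G {x} B}
  {Q : Option ι → ABPath G A (B ∪ (D.verts ∪ E.verts))}

/-- The new path ends inside `D`: it takes over the rest of `D`, and the path that ends in `x` is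
continued along `E`. -/
lemma IsLinkage.exists_option_of_last_mem (hP : IsLinkage P) (hDP : D.verts ⊆ (P i₀).verts)
    (hEP : ∀ i, ∀ u ∈ E.verts, u ∈ (P i).verts → u = x) (hQ : IsLinkage Q)
    (hQx : (Q (some i₀)).last = x) (hQi : ∀ i ≠ i₀, (Q (some i)).last = (P i).last)
    (hy : (Q none).last ∈ D.verts) :
    ∃ R : Option ι → ABPath G A B, IsLinkage R ∧ ∀ i, (R (some i)).last = (P i).last := by
  classical
  have hyx : (Q none).last ≠ x := fun h => Set.disjoint_left.mp (hQ (Option.some_ne_none i₀))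
    (Q (some i₀)).last_mem_verts (hQx.trans h.symm ▸ (Q none).last_mem_verts)
  obtain ⟨C, F, -, hFD, -, hCF⟩ := D.exists_split hy
  have hxF : x ∉ F.verts := fun h => hyx (hCF x C.mem_verts_of_singleton h).symm
  let Q' := Q ∘ Equiv.swap none (some i₀)
  have hQ' : IsLinkage Q' := fun i j hij => hQ ((Equiv.injective _).ne hij)
  refine hP.exists_option_of_tails Set.subset_union_left hQ' (i₀ := i₀) (fun i hi => ?_) E.verts
    (fun i hi hiE => ?_) ?_ ?_
  · rw [← hQi i hi]
    have hi' : some i ≠ some i₀ := (Option.some_injective _).ne hi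
    simp [Q', Equiv.swap_apply_of_ne_of_ne (Option.some_ne_none i) hi']
  · have hix : (P i).last = x := hEP i _ hiE (P i).last_mem_verts
    exact Set.disjoint_left.mp (hP hi) (hix ▸ (P i).last_mem_verts)
      (hDP D.mem_verts_of_singleton)
  · rw [show (Q' none).last = x by simp [Q', hQx]]
    exact ⟨E, fun u hu => ⟨.inr (.inr hu), hu⟩⟩
  · rw [show (Q' (some i₀)).last = (Q none).last by simp [Q']]
    exact ⟨F, fun u hu => ⟨⟨.inr (.inl (hFD hu)), hDP (hFD hu)⟩,
      fun huE => hxF (hEP i₀ u huE (hDP (hFD hu)) ▸ hu)⟩⟩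

lemma IsLinkage.exists_option_of_last_notMem (hP : IsLinkage P) (hDP : D.verts ⊆ (P i₀).verts)
    (hEP : ∀ i, ∀ u ∈ E.verts, u ∈ (P i).verts → u = x) (hQ : IsLinkage Q)
    (hQx : (Q (some i₀)).last = x) (hQi : ∀ i ≠ i₀, (Q (some i)).last = (P i).last)
    (hy : (Q none).last ∉ D.verts) :
    ∃ R : Option ι → ABPath G A B, IsLinkage R ∧ ∀ i, (R (some i)).last = (P i).last := by
  have hQP : ∀ i ≠ i₀, (P i).last ≠ (Q none).last := fun i hi h =>
    Set.disjoint_left.mp (hQ (Option.some_ne_none i)) (Q (some i)).last_mem_verts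
      ((hQi i hi).trans h ▸ (Q none).last_mem_verts)
  obtain ⟨N, hNX, hND, hNP⟩ : ∃ N : ABPath G {(Q none).last} B,
      N.verts ⊆ B ∪ (D.verts ∪ E.verts) ∧ Disjoint D.verts N.verts ∧
        ∀ i ≠ i₀, (P i).last ∉ N.verts := by
    rcases (Q none).last_mem with hyB | hyD | hyE
    · exact ⟨.nil hyB, by simp [(Q none).last_mem], by simpa using hy, by simpa using hQP⟩
    · exact absurd hyD hy
    · obtain ⟨C, F, -, hFE, -, hCF⟩ := E.exists_split hyE
      have hFP : ∀ i, ∀ u ∈ F.verts, u ∉ (P i).verts := fun i u hu huP => by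
        have hux : u = x := hEP i u (hFE hu) huP
        have hxy : x = (Q none).last := hCF x C.mem_verts_of_singleton (hux ▸ hu)
        exact hy (hxy ▸ D.mem_verts_of_singleton)
      exact ⟨F, fun u hu => .inr (.inr (hFE hu)),
        Set.disjoint_left.mpr fun u huD huF => hFP i₀ u huF (hDP huD),
        fun i _ h => hFP i _ h (P i).last_mem_verts⟩
  refine hP.exists_option_of_tails Set.subset_union_left hQ hQi N.verts hNP
    ⟨N, fun u hu => ⟨hNX hu, hu⟩⟩ ?_
  rw [hQx]
  exact ⟨D, fun u hu => ⟨⟨.inr (.inl hu), hDP hu⟩, Set.disjoint_left.mp hND hu⟩⟩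

end Crossing

lemma IsLinkage.exists_shortening (hP : IsLinkage P) {i₀ : ι} {x : V} {C : ABPath G A {x}}
    {D E : ABPath G {x} B} (hCP : C.verts ⊆ (P i₀).verts) (hDP : D.verts ⊆ (P i₀).verts)
    (hD : D.last = (P i₀).last) (hCD : ∀ u ∈ C.verts, u ∈ D.verts → u = x)
    (hEP : ∀ i, ∀ u ∈ E.verts, u ∈ (P i).verts → u = x) :
    ∃ R : ι → ABPath G A (B ∪ (D.verts ∪ E.verts)), (∀ i, (R i).verts ⊆ (P i).verts) ∧
      (R i₀).verts ⊆ C.verts ∧ (R i₀).last = x ∧ ∀ i ≠ i₀, (R i).last = (P i).last := by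
  suffices h : ∀ i, ∃ R : ABPath G A (B ∪ (D.verts ∪ E.verts)), R.verts ⊆ (P i).verts ∧
      (i = i₀ → R.verts ⊆ C.verts ∧ R.last = x) ∧ (i ≠ i₀ → R.last = (P i).last) by
    choose R hsub hcut hlast using h
    exact ⟨R, hsub, (hcut i₀ rfl).1, (hcut i₀ rfl).2, hlast⟩
  intro i
  obtain rfl | hi := eq_or_ne i i₀
  · have hC : C.last = x := C.last_mem
    obtain ⟨R, hR, hRx⟩ := ABPath.exists_retarget (X := B ∪ (D.verts ∪ E.verts)) C.walk
      C.first_mem (.inr (.inl (by simpa only [hC] using D.mem_verts_of_singleton))) (by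
        rintro u hu (huB | huD | huE)
        · have huP : u = (P i).last := (P i).eq_last u (hCP hu) huB
          have huD : u ∈ D.verts := by simpa only [huP, ← hD] using D.last_mem_verts
          exact (hCD u hu huD).trans hC.symm
        · exact (hCD u hu huD).trans hC.symm
        · exact (hEP i u huE (hCP hu)).trans hC.symm)
    exact ⟨R, hR.trans hCP, fun _ => ⟨hR, hRx.trans hC⟩, fun h => absurd rfl h⟩
  · have hPi : ∀ u ∈ (P i).verts, u ∉ (P i₀).verts := fun u hu =>
      Set.disjoint_left.mp (hP hi) hu
    obtain ⟨R, hR, hRx⟩ := ABPath.exists_retarget (X := B ∪ (D.verts ∪ E.verts)) (P i).walk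
      (P i).first_mem (.inl (P i).last_mem) (by
        rintro u hu (huB | huD | huE)
        · exact (P i).eq_last u hu huB
        · exact absurd (hDP huD) (hPi u hu)
        · have hux : u = x := hEP i u huE hu
          exact absurd (hDP (hux ▸ D.mem_verts_of_singleton)) (hPi u hu))
    exact ⟨R, hR, fun h => absurd h hi, fun _ => hRx⟩

lemma ABPath.exists_of_not_separates {S : Finset V} (hS : ¬ Separates G A B S) :
    ∃ W : ABPath G A B, ∀ u ∈ W.verts, u ∉ S := by
  simp only [Separates, not_forall, not_exists, not_and] at hS
  obtain ⟨a, ha, b, hb, w, hw⟩ := hS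
  obtain ⟨W, hWw⟩ := ABPath.exists_of_walk w ha hb
  exact ⟨W, fun u hu => hw u (hWw hu)⟩

/-- Take an `A`–`B` path `W` avoiding the last vertices of the linkage. If `W` meets the linkage,
let `x` on `P i₀` be the last vertex where it does, and let `D` and `E` be the tails of `P i₀` and
of `W` from `x`. Cut off `D` and apply induction with `D` and `E` added to the target set `B`; the
paths so obtained extend along `D` and `E` to `B`. -/
theorem IsLinkage.exists_augmentation [Fintype ι] (hP : IsLinkage P)
    (hsep : ∀ S : Finset V, S.card ≤ Fintype.card ι → ¬ Separates G A B S) :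
    ∃ R : Option ι → ABPath G A B, IsLinkage R ∧ ∀ i, (R (some i)).last = (P i).last := by
  classical
  obtain ⟨U, hU⟩ : ∃ U : Finset V, ∀ i, (P i).verts ⊆ U :=
    ⟨Finset.univ.biUnion fun i => (P i).walk.support.toFinset, fun i u hu => by
      simpa using ⟨i, hu⟩⟩
  induction U using Finset.strongInduction generalizing B with | H U ih
  obtain ⟨W, hW⟩ := ABPath.exists_of_not_separates
    (hsep (Finset.univ.image fun i => (P i).last) Finset.card_image_le)
  by_cases hWP : Disjoint W.verts (⋃ i, (P i).verts)
  · exact ⟨fun o => o.elim W P, isLinkage_option (Set.disjoint_iUnion_right.mp hWP) hP,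
      fun i => rfl⟩
  obtain ⟨x, hx, E, hEW, hEP⟩ :=
    W.exists_tail_from_last_mem (Set.not_disjoint_iff_nonempty_inter.mp hWP)
  obtain ⟨i₀, hxi₀⟩ := Set.mem_iUnion.mp hx
  replace hEP : ∀ i, ∀ u ∈ E.verts, u ∈ (P i).verts → u = x := fun i u hu hui =>
    hEP u hu (Set.mem_iUnion.mpr ⟨i, hui⟩)
  have hxlast : (P i₀).last ≠ x := fun h =>
    hW x (hEW E.mem_verts_of_singleton) (Finset.mem_image.mpr ⟨i₀, Finset.mem_univ _, h⟩)
  obtain ⟨C, D, hCP, hDP, hD, hCD⟩ := (P i₀).exists_split hxi₀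
  obtain ⟨P', hP'P, hP'C, hP'x, hP'last⟩ := hP.exists_shortening hCP hDP hD hCD hEP
  have hP'U : ∀ i, (P' i).verts ⊆ U.erase (P i₀).last := fun i u hu => by
    refine Finset.mem_erase.mpr ⟨?_, hU i (hP'P i hu)⟩
    rintro rfl
    obtain rfl : i = i₀ := by_contra fun hi =>
      Set.disjoint_left.mp (hP hi) (hP'P i hu) (P i₀).last_mem_verts
    exact hxlast (hCD _ (hP'C hu) (hD ▸ D.last_mem_verts))
  obtain ⟨Q, hQ, hQlast⟩ := ih _ (Finset.erase_ssubset (hU i₀ (P i₀).last_mem_verts))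
    (fun i j hij => (hP hij).mono (hP'P i) (hP'P j))
    (fun S hS h => hsep S hS fun a ha b hb => h a ha b (.inl hb)) hP'U
  have hQx := (hQlast i₀).trans hP'x
  have hQi := fun i hi => (hQlast i).trans (hP'last i hi)
  by_cases hy : (Q none).last ∈ D.verts
  · exact hP.exists_option_of_last_mem hDP hEP hQ hQx hQi hy
  · exact hP.exists_option_of_last_notMem hDP hEP hQ hQx hQi hy

/-- Menger's theorem. -/
theorem exists_isLinkage_of_forall_not_separates {k : ℕ}
    (hsep : ∀ S : Finset V, S.card < k → ¬ Separates G A B S) :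
    ∃ P : Fin k → ABPath G A B, IsLinkage P := by
  induction k with
  | zero => exact ⟨Fin.elim0, fun i => i.elim0⟩
  | succ k ih =>
    obtain ⟨P, hP⟩ := ih fun S hS => hsep S (by lia)
    obtain ⟨R, hR, -⟩ := hP.exists_augmentation fun S hS => hsep S (by simpa using hS)
    exact ⟨R ∘ finSuccEquiv k, fun i j hij => hR ((finSuccEquiv k).injective.ne hij)⟩

end Menger

section Cycles

variable {Y : Set V} {v v₁ v₂ : V} {C : G.Walk v v} {C₁ : G.Walk v₁ v₁} {C₂ : G.Walk v₂ v₂}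

lemma isPath_append {a b c : V} {p : G.Walk a b} {q : G.Walk b c} (hp : p.IsPath) (hq : q.IsPath)
    (hpq : ∀ u ∈ p.support, u ∈ q.support → u = b) : (p.append q).IsPath := by
  have hb : b ∉ q.support.tail :=
    (List.nodup_cons.mp (q.cons_tail_support.symm ▸ hq.support_nodup)).1
  rw [Walk.isPath_def, Walk.support_append, List.nodup_append']
  exact ⟨hp.support_nodup, hq.support_nodup.tail, fun u hup huq =>
    hb (hpq u hup (List.mem_of_mem_tail huq) ▸ huq)⟩

lemma isCycle_append_reverse {a b : V} {p q : G.Walk a b} (hp : p.IsPath) (hq : q.IsPath)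
    (hpq : ∀ u ∈ p.support, u ∈ q.support → u = a ∨ u = b) (hlen : 1 < p.length) :
    (p.append q.reverse).IsCycle := by
  have ha : a ∉ p.support.tail :=
    (List.nodup_cons.mp (p.cons_tail_support.symm ▸ hp.support_nodup)).1
  have hb : b ∉ q.reverse.support.tail :=
    (List.nodup_cons.mp (q.reverse.cons_tail_support.symm ▸ hq.reverse.support_nodup)).1
  refine hp.isCycle_append hq.reverse (fun u hup huq => ?_) (.inl hlen)
  have huq' : u ∈ q.support := by simpa using List.mem_of_mem_tail huq
  obtain rfl | rfl := hpq u (List.mem_of_mem_tail hup) huq'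
  · exact ha hup
  · exact hb huq

lemma exists_arcs (hC : C.IsCycle) {a b : V} (ha : a ∈ C.support) (hb : b ∈ C.support)
    (hab : a ≠ b) :
    ∃ p q : G.Walk a b, p.IsPath ∧ q.IsPath ∧ p.support ⊆ C.support ∧ q.support ⊆ C.support ∧
      p.length + q.length = C.length := by
  classical
  have hrot : (C.rotate a ha).IsCycle := hC.rotate ha
  obtain ⟨p, q, hpq⟩ :=
    Walk.mem_support_iff_exists_append.mp ((C.mem_support_rotate_iff a ha).mpr hb)
  have hsupp : ∀ u ∈ (p.append q).support, u ∈ C.support := fun u hu =>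
    (C.mem_support_rotate_iff a ha).mp (hpq ▸ hu)
  have hlen : (p.append q).length = C.length := hpq ▸ C.length_rotate a ha
  rw [hpq] at hrot
  refine ⟨p, q.reverse, hrot.isPath_of_append_left (Walk.not_nil_of_ne hab.symm),
    (hrot.isPath_of_append_right (Walk.not_nil_of_ne hab)).reverse,
    fun u hu => hsupp u (by simp [hu]), fun u hu => hsupp u ?_, by simpa using hlen⟩
  rw [Walk.support_reverse, List.mem_reverse] at hu
  simp [hu]

lemma exists_isCycle_of_disjoint_paths {P Q : ABPath G X Y} (hXY : Disjoint X Y)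
    (hPQ : Disjoint P.verts Q.verts) {p : G.Walk P.first Q.first} {q : G.Walk P.last Q.last}
    (hp : p.IsPath) (hq : q.IsPath) (hpX : ∀ u ∈ p.support, u ∈ X) (hqY : ∀ u ∈ q.support, u ∈ Y) :
    ∃ (u : V) (c : G.Walk u u), c.IsCycle ∧
      c.length = p.length + q.length + (P.walk.length + Q.walk.length) := by
  have hpQ : (p.append Q.walk).IsPath :=
    isPath_append hp Q.isPath fun u hup huQ => Q.eq_first u huQ (hpX u hup)
  have hPq : (P.walk.append q).IsPath :=
    isPath_append P.isPath hq fun u huP huq => P.eq_last u huP (hqY u huq)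
  have hlen : 1 < (p.append Q.walk).length := by
    have hp0 : p.length ≠ 0 := fun h => Set.disjoint_left.mp hPQ P.first_mem_verts
      (Walk.eq_of_length_eq_zero h ▸ Q.first_mem_verts)
    have hQ0 : Q.walk.length ≠ 0 := fun h => Set.disjoint_left.mp hXY Q.first_mem
      (Walk.eq_of_length_eq_zero h ▸ Q.last_mem)
    rw [Walk.length_append]
    lia
  refine ⟨_, _, isCycle_append_reverse hpQ hPq (fun u hu hu' => ?_) hlen, ?_⟩
  · rw [Walk.mem_support_append_iff] at hu hu'
    rcases hu with hup | huQ <;> rcases hu' with huP | huq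
    · exact .inl (P.eq_first u huP (hpX u hup))
    · exact absurd (hqY u huq) (Set.disjoint_left.mp hXY (hpX u hup))
    · exact absurd huQ (Set.disjoint_left.mp hPQ huP)
    · exact .inr (Q.eq_last u huQ (hqY u huq))
  · simp only [Walk.length_append, Walk.length_reverse]
    lia

/-- Replacing both arcs by their complements turns a cycle of even length `ℓ` into one whose length
is congruent to `2 - ℓ` modulo 4. -/
lemma exists_isCycle_four_dvd_length_of_even (hC₁ : C₁.IsCycle) (hC₂ : C₂.IsCycle)
    (hodd : Odd C₁.length) (hmod : C₁.length % 4 = C₂.length % 4)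
    (hdisj : Disjoint {u | u ∈ C₁.support} {u | u ∈ C₂.support})
    {P Q : ABPath G {u | u ∈ C₁.support} {u | u ∈ C₂.support}} (hPQ : Disjoint P.verts Q.verts)
    (heven : Even (P.walk.length + Q.walk.length)) :
    ∃ (u : V) (c : G.Walk u u), c.IsCycle ∧ 4 ∣ c.length := by
  have hfirst : P.first ≠ Q.first := fun h =>
    Set.disjoint_left.mp hPQ P.first_mem_verts (h ▸ Q.first_mem_verts)
  have hlast : P.last ≠ Q.last := fun h =>
    Set.disjoint_left.mp hPQ P.last_mem_verts (h ▸ Q.last_mem_verts)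
  obtain ⟨p, p', hp, hp', hpC, hpC', hplen⟩ := exists_arcs hC₁ P.first_mem Q.first_mem hfirst
  obtain ⟨q, q', hq, hq', hqC, hqC', hqlen⟩ := exists_arcs hC₂ P.last_mem Q.last_mem hlast
  by_contra hno
  have hndvd {r : G.Walk P.first Q.first} {s : G.Walk P.last Q.last} (hr : r.IsPath)
      (hs : s.IsPath) (hrC : r.support ⊆ C₁.support) (hsC : s.support ⊆ C₂.support) :
      ¬ 4 ∣ r.length + s.length + (P.walk.length + Q.walk.length) := fun h => by
    obtain ⟨u, c, hc, hlen⟩ := exists_isCycle_of_disjoint_paths hdisj hPQ hr hs hrC hsC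
    exact hno ⟨u, c, hc, hlen ▸ h⟩
  have hpq := hndvd hp hq hpC hqC
  have hpq' := hndvd hp hq' hpC hqC'
  have hp'q := hndvd hp' hq hpC' hqC
  have hp'q' := hndvd hp' hq' hpC' hqC'
  rw [Nat.odd_iff] at hodd
  rw [Nat.even_iff] at heven
  lia

lemma exists_isCycle_four_dvd_length (hC₁ : C₁.IsCycle) (hC₂ : C₂.IsCycle) (hodd : Odd C₁.length)
    (hmod : C₁.length % 4 = C₂.length % 4)
    (hdisj : Disjoint {u | u ∈ C₁.support} {u | u ∈ C₂.support})
    {P Q R : ABPath G {u | u ∈ C₁.support} {u | u ∈ C₂.support}}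
    (hPQ : Disjoint P.verts Q.verts) (hPR : Disjoint P.verts R.verts)
    (hQR : Disjoint Q.verts R.verts) :
    ∃ (u : V) (c : G.Walk u u), c.IsCycle ∧ 4 ∣ c.length := by
  have heven : Even (P.walk.length + Q.walk.length) ∨ Even (P.walk.length + R.walk.length) ∨
      Even (Q.walk.length + R.walk.length) := by
    simp only [Nat.even_add]
    tauto
  rcases heven with h | h | h
  · exact exists_isCycle_four_dvd_length_of_even hC₁ hC₂ hodd hmod hdisj hPQ h
  · exact exists_isCycle_four_dvd_length_of_even hC₁ hC₂ hodd hmod hdisj hPR h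
  · exact exists_isCycle_four_dvd_length_of_even hC₁ hC₂ hodd hmod hdisj hQR h

end Cycles

section EssentialConnectivity

variable {S : Set V} {v v₁ v₂ : V} {C : G.Walk v v} {C₁ : G.Walk v₁ v₁} {C₂ : G.Walk v₂ v₂}

lemma deleteVerts_adj {a b : V} :
    (deleteVerts G S).Adj a b ↔ G.Adj a b ∧ a ∉ S ∧ b ∉ S := by
  simp only [deleteVerts, fromRel_adj]
  exact ⟨fun ⟨_, h⟩ => h.elim id fun ⟨hba, hb, ha⟩ => ⟨hba.symm, ha, hb⟩,
    fun h => ⟨h.1.ne, .inl h⟩⟩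

lemma deleteVerts_le : deleteVerts G S ≤ G := fun _ _ h => (deleteVerts_adj.mp h).1

lemma notMem_of_mem_support_deleteVerts {a b : V} (w : (deleteVerts G S).Walk a b) (ha : a ∉ S) :
    ∀ u ∈ w.support, u ∉ S := by
  induction w with
  | nil => simpa using ha
  | cons h w ih =>
    rw [Walk.support_cons, List.forall_mem_cons]
    exact ⟨ha, ih (deleteVerts_adj.mp h).2.2⟩

lemma exists_adj_notMem_of_two_mul_card_lt_length (hC : C.IsCycle) {T : Finset V}
    (hT : 2 * T.card < C.length) :
    ∃ a ∈ C.support, ∃ b ∈ C.support, G.Adj a b ∧ a ∉ T ∧ b ∉ T := by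
  classical
  by_contra! hcover
  have hcard {f : ℕ → V} (hf : Set.InjOn f (Finset.range C.length)) :
      {i ∈ Finset.range C.length | f i ∈ T}.card ≤ T.card :=
    Finset.card_le_card_of_injOn f (fun i hi => (Finset.mem_filter.mp hi).2)
      (hf.mono (Finset.coe_subset.mpr (Finset.filter_subset _ _)))
  have hstart : Set.InjOn C.getVert (Finset.range C.length) :=
    hC.getVert_injOn'.mono fun i hi => by
      have hi' : i < C.length := by simpa using hi
      exact Nat.le_sub_one_of_lt hi'
  have hend : Set.InjOn (fun i => C.getVert (i + 1)) (Finset.range C.length) := by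
    refine hC.getVert_injOn.comp (add_left_injective 1).injOn fun i hi => ?_
    have hi' : i < C.length := by simpa using hi
    exact ⟨Nat.le_add_left 1 i, hi'⟩
  have hrange : Finset.range C.length ⊆ {i ∈ Finset.range C.length | C.getVert i ∈ T} ∪
      {i ∈ Finset.range C.length | C.getVert (i + 1) ∈ T} := fun i hi => by
    rw [← Finset.filter_or, Finset.mem_filter, or_iff_not_imp_left]
    exact ⟨hi, hcover _ (C.getVert_mem_support i) _ (C.getVert_mem_support (i + 1))
      (C.adj_getVert_succ (Finset.mem_range.mp hi))⟩
  have hlen : C.length ≤ T.card + T.card := calc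
    C.length = (Finset.range C.length).card := (Finset.card_range _).symm
    _ ≤ _ := Finset.card_le_card hrange
    _ ≤ _ := Finset.card_union_le _ _
    _ ≤ T.card + T.card := add_le_add (hcard hstart) (hcard hend)
  lia

lemma EssentiallyThreeConnected.not_separates (hG : EssentiallyThreeConnected G)
    (hC₁ : C₁.IsCycle) (hC₂ : C₂.IsCycle) (hlen₁ : 4 < C₁.length) (hlen₂ : 4 < C₂.length)
    {T : Finset V} (hT : T.card < 3) :
    ¬ Separates G {u | u ∈ C₁.support} {u | u ∈ C₂.support} T := by
  intro hsep
  obtain ⟨a, ha, a', -, haa', haT, haT'⟩ :=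
    exists_adj_notMem_of_two_mul_card_lt_length hC₁ (T := T) (by lia)
  obtain ⟨b, hb, b', -, hbb', hbT, hbT'⟩ :=
    exists_adj_notMem_of_two_mul_card_lt_length hC₂ (T := T) (by lia)
  obtain ⟨w⟩ := hG.2 T (by rw [Set.ncard_coe_finset]; lia) a a' b b' haa'.ne hbb'.ne
    (deleteVerts_adj.mpr ⟨haa', haT, haT'⟩).reachable
    (deleteVerts_adj.mpr ⟨hbb', hbT, hbT'⟩).reachable
  obtain ⟨u, hu, huT⟩ := hsep a ha b hb (w.mapLe deleteVerts_le)
  exact notMem_of_mem_support_deleteVerts w haT u (by simpa using hu) huT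

end EssentialConnectivity

theorem stmt_14_general (hno : ¬ ∃ (u : V) (c : G.Walk u u), c.IsCycle ∧ 4 ∣ c.length)
    {v₁ v₂ : V} {C₁ : G.Walk v₁ v₁} {C₂ : G.Walk v₂ v₂} (hC₁ : C₁.IsCycle) (hC₂ : C₂.IsCycle)
    (hodd : Odd C₁.length) (hmod : C₁.length % 4 = C₂.length % 4)
    (hdisj : ∀ u, u ∈ C₁.support → u ∉ C₂.support) :
    (∀ {a₁ a₂ b₁ b₂ c₁ c₂ : V} (P : G.Walk a₁ a₂) (Q : G.Walk b₁ b₂) (R : G.Walk c₁ c₂),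
      a₁ ∈ C₁.support → a₂ ∈ C₂.support → b₁ ∈ C₁.support → b₂ ∈ C₂.support →
      c₁ ∈ C₁.support → c₂ ∈ C₂.support →
      ¬ (P.support.Disjoint Q.support ∧ P.support.Disjoint R.support ∧
        Q.support.Disjoint R.support)) ∧
    (EssentiallyThreeConnected G → C₁.length = 3 ∨ C₂.length = 3) := by
  have hdisj' : Disjoint {u | u ∈ C₁.support} {u | u ∈ C₂.support} := Set.disjoint_left.mpr hdisj
  constructor
  · rintro a₁ a₂ b₁ b₂ c₁ c₂ P Q R ha₁ ha₂ hb₁ hb₂ hc₁ hc₂ ⟨hPQ, hPR, hQR⟩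
    have trim {a b : V} (W : G.Walk a b) (ha : a ∈ C₁.support) (hb : b ∈ C₂.support) :
        ∃ W' : ABPath G {u | u ∈ C₁.support} {u | u ∈ C₂.support},
          W'.verts ⊆ {u | u ∈ W.support} := ABPath.exists_of_walk W ha hb
    obtain ⟨P', hP'⟩ := trim P ha₁ ha₂
    obtain ⟨Q', hQ'⟩ := trim Q hb₁ hb₂
    obtain ⟨R', hR'⟩ := trim R hc₁ hc₂
    exact hno <| exists_isCycle_four_dvd_length hC₁ hC₂ hodd hmod hdisj'
      ((Set.disjoint_left.mpr hPQ).mono hP' hQ') ((Set.disjoint_left.mpr hPR).mono hP' hR')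
      ((Set.disjoint_left.mpr hQR).mono hQ' hR')
  · intro hG
    by_contra! hlen
    have h4₁ : 4 < C₁.length := by
      have := hC₁.three_le_length
      grind
    have h4₂ : 4 < C₂.length := by
      have := hC₂.three_le_length
      grind
    obtain ⟨P, hP⟩ := exists_isLinkage_of_forall_not_separates (k := 3)
      fun S hS => hG.not_separates hC₁ hC₂ h4₁ h4₂ hS
    exact hno <| exists_isCycle_four_dvd_length hC₁ hC₂ hodd hmod hdisj'
      (hP (i := 0) (j := 1) (by decide)) (hP (i := 0) (j := 2) (by decide))
      (hP (i := 1) (j := 2) (by decide))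

end DisjointPaths

/-- In a graph with no cycle of length divisible by 4, two vertex-disjoint odd cycles
with lengths congruent modulo 4 cannot be joined by three pairwise vertex-disjoint
paths.  In particular, if the graph is essentially 3-connected, it contains no two
vertex-disjoint 5-cycles. -/
theorem stmt_14 {V : Type*} (G : SimpleGraph V)
    (hno : ¬ ∃ (u : V) (c : G.Walk u u), c.IsCycle ∧ 4 ∣ c.length) :
    (¬ ∃ (v₁ v₂ : V) (C₁ : G.Walk v₁ v₁) (C₂ : G.Walk v₂ v₂)
        (a₁ a₂ b₁ b₂ c₁ c₂ : V)
        (P : G.Walk a₁ a₂) (Q : G.Walk b₁ b₂) (R : G.Walk c₁ c₂),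
      C₁.IsCycle ∧ C₂.IsCycle ∧ Odd C₁.length ∧ Odd C₂.length ∧
      C₁.length % 4 = C₂.length % 4 ∧
      (∀ u, u ∈ C₁.support → u ∉ C₂.support) ∧
      P.IsPath ∧ Q.IsPath ∧ R.IsPath ∧
      a₁ ∈ C₁.support ∧ a₂ ∈ C₂.support ∧
      b₁ ∈ C₁.support ∧ b₂ ∈ C₂.support ∧
      c₁ ∈ C₁.support ∧ c₂ ∈ C₂.support ∧
      (∀ u ∈ P.support, u ≠ a₁ → u ≠ a₂ → u ∉ C₁.support ∧ u ∉ C₂.support) ∧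
      (∀ u ∈ Q.support, u ≠ b₁ → u ≠ b₂ → u ∉ C₁.support ∧ u ∉ C₂.support) ∧
      (∀ u ∈ R.support, u ≠ c₁ → u ≠ c₂ → u ∉ C₁.support ∧ u ∉ C₂.support) ∧
      (∀ u, u ∈ P.support → u ∉ Q.support) ∧
      (∀ u, u ∈ P.support → u ∉ R.support) ∧
      (∀ u, u ∈ Q.support → u ∉ R.support)) ∧
    (EssentiallyThreeConnected G →
      ¬ ∃ (v₁ v₂ : V) (C₁ : G.Walk v₁ v₁) (C₂ : G.Walk v₂ v₂),
        C₁.IsCycle ∧ C₂.IsCycle ∧ C₁.length = 5 ∧ C₂.length = 5 ∧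
        ∀ u, u ∈ C₁.support → u ∉ C₂.support) := by
  constructor
  · rintro ⟨v₁, v₂, C₁, C₂, a₁, a₂, b₁, b₂, c₁, c₂, P, Q, R, hC₁, hC₂, hodd, -, hmod,
      hdisj, -, -, -, ha₁, ha₂, hb₁, hb₂, hc₁, hc₂, -, -, -, hPQ, hPR, hQR⟩
    exact (stmt_14_general hno hC₁ hC₂ hodd hmod hdisj).1 P Q R ha₁ ha₂ hb₁ hb₂ hc₁ hc₂
      ⟨hPQ, hPR, hQR⟩
  · rintro hG ⟨v₁, v₂, C₁, C₂, hC₁, hC₂, hlen₁, hlen₂, hdisj⟩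
    have hlen := (stmt_14_general hno hC₁ hC₂ ⟨2, hlen₁⟩ (by rw [hlen₁, hlen₂]) hdisj).2 hG
    lia
end
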